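/- If a₁ and a₂ are real numbers with a₁ ≠ a₂ and a₁ ≠ -a₂, then the Painlevé II equations y'' = 2y³ + xy + a₁ and y'' = 2y³ + xy + a₂ are not point-equivalent. -/

import Mathlib

noncomputable def pdx (f : ℝ → ℝ → ℝ) (x y : ℝ) : ℝ := deriv (fun t => f t y) x
noncomputable def pdy (f : ℝ → ℝ → ℝ) (x y : ℝ) : ℝ := deriv (fun t => f x t) y

/-- `y` solves the Painlevé II equation with parameter `a` on the set `I`. -/
def SolvesPII (a : ℝ) (y : ℝ → ℝ) (I : Set ℝ) : Prop :=
  ∀ x ∈ I, deriv (deriv y) x = 2 * (y x) ^ 3 + x * y x + a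

/-- The Painlevé II equations with parameters `a₁`, `a₂` are point-equivalent:
there is a smooth point transformation (x,y) ↦ (X(x,y), Y(x,y)) with nonvanishing
Jacobian carrying every solution of the first equation to a solution of the second. -/
def PIIPointEquivalent (a₁ a₂ : ℝ) : Prop :=
  ∃ X Y : ℝ → ℝ → ℝ,
    ContDiff ℝ (⊤ : ℕ∞) (Function.uncurry X) ∧ ContDiff ℝ (⊤ : ℕ∞) (Function.uncurry Y) ∧
    (∀ x y, pdx X x y * pdy Y x y - pdy X x y * pdx Y x y ≠ 0) ∧
    ∀ (I : Set ℝ) (y : ℝ → ℝ), IsOpen I → ContDiffOn ℝ (⊤ : ℕ∞) y I → SolvesPII a₁ y I →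
      ∃ w : ℝ → ℝ, (∀ x ∈ I, w (X x (y x)) = Y x (y x)) ∧
        SolvesPII a₂ w ((fun x => X x (y x)) '' I)

open Filter Topology Set
open scoped ContDiff

/-- Local existence of smooth solutions of Painlevé II with prescribed initial data. -/
lemma exists_sol (a x₀ y₀ p₀ : ℝ) : ∃ (I : Set ℝ) (y : ℝ → ℝ), IsOpen I ∧ x₀ ∈ I ∧
    ContDiffOn ℝ ∞ y I ∧ y x₀ = y₀ ∧ deriv y x₀ = p₀ ∧
    ∀ x ∈ I, deriv (deriv y) x = 2 * (y x) ^ 3 + x * y x + a := by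
  let f : ℝ × ℝ × ℝ → ℝ × ℝ × ℝ := fun q => (1, q.2.2, 2 * q.2.1 ^ 3 + q.1 * q.2.1 + a)
  have hf : ContDiff ℝ ∞ f := by fun_prop
  obtain ⟨α, h0, ε, hε, hα⟩ :=
    (hf.contDiffAt (x := (x₀, y₀, p₀)) |>.of_le
      (by exact_mod_cast le_top : (1 : WithTop ℕ∞) ≤ ∞)).exists_forall_mem_closedBall_exists_eq_forall_mem_Ioo_hasDerivAt₀ x₀
  set I := Ioo (x₀ - ε) (x₀ + ε) with hI
  have hx₀ : x₀ ∈ I := by constructor <;> linarith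
  have hIo : IsOpen I := isOpen_Ioo
  have d1 : ∀ t ∈ I, HasDerivAt (fun t => (α t).1) 1 t := fun t ht => by
    have := (hasFDerivAt_fst.comp_hasDerivAt t (hα t ht)); exact this
  have d2 : ∀ t ∈ I, HasDerivAt (fun t => (α t).2.1) (α t).2.2 t := fun t ht => by
    have := (hasFDerivAt_fst.comp_hasDerivAt t (hasFDerivAt_snd.comp_hasDerivAt t (hα t ht)))
    exact this
  have d3 : ∀ t ∈ I, HasDerivAt (fun t => (α t).2.2)
      (2 * (α t).2.1 ^ 3 + (α t).1 * (α t).2.1 + a) t := fun t ht => by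
    have := (hasFDerivAt_snd.comp_hasDerivAt t (hasFDerivAt_snd.comp_hasDerivAt t (hα t ht)))
    exact this
  have e1 : ∀ t ∈ I, (α t).1 = t := by
    have := ODE_solution_unique_of_mem_Ioo (v := fun _ _ => (1 : ℝ)) (s := fun _ => univ) (K := 0)
      (f := fun t => (α t).1) (g := fun t => t) (t₀ := x₀) (a := x₀ - ε) (b := x₀ + ε)
      (fun t _ => (LipschitzWith.const (1 : ℝ)).lipschitzOnWith) hx₀
      (fun t ht => ⟨d1 t ht, trivial⟩) (fun t _ => ⟨hasDerivAt_id t, trivial⟩) (by simp [h0])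
    exact this
  have dα : ∀ t ∈ I, deriv α t = f (α t) := fun t ht => (hα t ht).deriv
  have hsm : ContDiffOn ℝ ∞ α I := by
    rw [contDiffOn_infty]
    intro n
    induction n with
    | zero =>
      simp only [Nat.cast_zero, contDiffOn_zero]
      exact fun t ht => (hα t ht).continuousAt.continuousWithinAt
    | succ n ih =>
      rw [Nat.cast_succ, contDiffOn_succ_iff_deriv_of_isOpen hIo]
      refine ⟨fun t ht => (hα t ht).differentiableAt.differentiableWithinAt, by simp, ?_⟩
      refine ContDiffOn.congr ?_ dα
      exact (hf.of_le (by exact_mod_cast le_top)).comp_contDiffOn ih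
  refine ⟨I, fun t => (α t).2.1, hIo, hx₀, ?_, by simp [h0], ?_, ?_⟩
  · fun_prop
  · rw [(d2 x₀ hx₀).deriv, h0]
  · intro x hx
    have : deriv (fun t => (α t).2.1) =ᶠ[𝓝 x] fun t => (α t).2.2 := by
      filter_upwards [hIo.mem_nhds hx] with t ht using (d2 t ht).deriv
    rw [this.deriv_eq, (d3 x hx).deriv, e1 x hx]

/-- If `w ∘ u = v` near a regular point of `u`, then `w` is differentiable at the image. -/
lemma hasDerivAt_of_comp {I : Set ℝ} (hI : IsOpen I) {u v w : ℝ → ℝ} {t u' v' : ℝ} (ht : t ∈ I)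
    (hw : ∀ s ∈ I, w (u s) = v s) (hu : HasStrictDerivAt u u' t) (hu' : u' ≠ 0)
    (hv : HasDerivAt v v' t) : HasDerivAt w (v' / u') (u t) := by
  have hg := (hu.to_localInverse hu').hasDerivAt
  have hr := hu.eventually_right_inverse hu'
  have hl : hu.localInverse u u' t hu' (u t) = t := (hu.eventually_left_inverse hu').self_of_nhds
  set g := hu.localInverse u u' t hu'
  have hgI : ∀ᶠ s in 𝓝 (u t), g s ∈ I :=
    hg.continuousAt.eventually (by rw [hl]; exact hI.mem_nhds ht)
  have : w =ᶠ[𝓝 (u t)] v ∘ g := by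
    filter_upwards [hr, hgI] with s h1 h2
    rw [Function.comp, ← hw _ h2, h1]
  rw [div_eq_mul_inv]
  refine HasDerivAt.congr_of_eventuallyEq ?_ this
  exact HasDerivAt.comp (u t) (by rw [hl]; exact hv) hg

lemma smooth_hd {I : Set ℝ} (hI : IsOpen I) {u : ℝ → ℝ} (hu : ContDiffOn ℝ ∞ u I) {t : ℝ}
    (ht : t ∈ I) : HasStrictDerivAt u (deriv u t) t :=
  (hu.contDiffAt (hI.mem_nhds ht)).hasStrictDerivAt (by simp)

lemma smooth_deriv {I : Set ℝ} (hI : IsOpen I) {u : ℝ → ℝ} (hu : ContDiffOn ℝ ∞ u I) :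
    ContDiffOn ℝ ∞ (deriv u) I :=
  ((contDiffOn_infty_iff_deriv_of_isOpen hI).1 hu).2

/-- The parametric form of the equation, valid on all of `I`. -/
lemma param_eq {I : Set ℝ} (hI : IsOpen I) {u v w : ℝ → ℝ} (a : ℝ)
    (hu : ContDiffOn ℝ ∞ u I) (hv : ContDiffOn ℝ ∞ v I)
    (hw : ∀ s ∈ I, w (u s) = v s)
    (hw2 : ∀ s ∈ I, deriv (deriv w) (u s) = 2 * (v s) ^ 3 + u s * v s + a) {t : ℝ} (ht : t ∈ I) :
    deriv (deriv v) t * deriv u t - deriv v t * deriv (deriv u) t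
      = (deriv u t) ^ 3 * (2 * (v t) ^ 3 + u t * v t + a) := by
  have hu1 := smooth_deriv hI hu
  have hv1 := smooth_deriv hI hv
  have hu2 := smooth_deriv hI hu1
  have hv2 := smooth_deriv hI hv1
  -- regular points
  have reg : ∀ s ∈ I, deriv u s ≠ 0 →
      deriv (deriv v) s * deriv u s - deriv v s * deriv (deriv u) s
      = (deriv u s) ^ 3 * (2 * (v s) ^ 3 + u s * v s + a) := by
    intro s hs hs0
    have hJ : IsOpen (I ∩ deriv u ⁻¹' {0}ᶜ) :=
      hu1.continuousOn.isOpen_inter_preimage hI isOpen_compl_singleton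
    have k1 : ∀ r ∈ I ∩ deriv u ⁻¹' {0}ᶜ, deriv w (u r) = deriv v r / deriv u r :=
      fun r hr => (hasDerivAt_of_comp hI hr.1 hw (smooth_hd hI hu hr.1) hr.2
        (smooth_hd hI hv hr.1).hasDerivAt).deriv
    have k2 := (hasDerivAt_of_comp hJ ⟨hs, hs0⟩ k1 (smooth_hd hI hu hs) hs0
      ((smooth_hd hI hv1 hs).hasDerivAt.fun_div (smooth_hd hI hu1 hs).hasDerivAt hs0)).deriv
    rw [hw2 s hs] at k2
    rw [k2]
    field_simp
  by_cases h : t ∈ closure {s | s ∈ I ∧ deriv u s ≠ 0}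
  · have hc : ContinuousAt (fun s => deriv (deriv v) s * deriv u s - deriv v s * deriv (deriv u) s
      - (deriv u s) ^ 3 * (2 * (v s) ^ 3 + u s * v s + a)) t := by
      have := (hu.continuousOn.continuousAt (hI.mem_nhds ht))
      have := (hv.continuousOn.continuousAt (hI.mem_nhds ht))
      have := (hu1.continuousOn.continuousAt (hI.mem_nhds ht))
      have := (hv1.continuousOn.continuousAt (hI.mem_nhds ht))
      have := (hu2.continuousOn.continuousAt (hI.mem_nhds ht))
      have := (hv2.continuousOn.continuousAt (hI.mem_nhds ht))
      fun_prop
    rw [mem_closure_iff_nhdsWithin_neBot] at h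
    have h1 := hc.tendsto.mono_left (nhdsWithin_le_nhds (s := {s | s ∈ I ∧ deriv u s ≠ 0}))
    have h2 : Tendsto (fun s => deriv (deriv v) s * deriv u s - deriv v s * deriv (deriv u) s
      - (deriv u s) ^ 3 * (2 * (v s) ^ 3 + u s * v s + a))
      (𝓝[{s | s ∈ I ∧ deriv u s ≠ 0}] t) (𝓝 0) := by
      refine tendsto_const_nhds.congr' ?_
      filter_upwards [self_mem_nhdsWithin] with s hs
      rw [reg s hs.1 hs.2, sub_self]
    exact sub_eq_zero.1 (tendsto_nhds_unique h1 h2)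
  · have h0 : deriv u =ᶠ[𝓝 t] fun _ => 0 := by
      filter_upwards [isClosed_closure.isOpen_compl.mem_nhds h, hI.mem_nhds ht] with s hs hsI
      by_contra hne
      exact hs (subset_closure ⟨hsI, hne⟩)
    have h1 : deriv (deriv u) t = 0 := by rw [h0.deriv_eq]; simp
    rw [h1, h0.self_of_nhds]; ring

lemma regular {I : Set ℝ} (hI : IsOpen I) {u v w : ℝ → ℝ} (a : ℝ)
    (hu : ContDiffOn ℝ ∞ u I) (hv : ContDiffOn ℝ ∞ v I)
    (hw : ∀ s ∈ I, w (u s) = v s)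
    (hw2 : ∀ s ∈ I, deriv (deriv w) (u s) = 2 * (v s) ^ 3 + u s * v s + a) {t : ℝ} (ht : t ∈ I)
    (hne : ¬ (deriv u t = 0 ∧ deriv v t = 0)) : deriv u t ≠ 0 := by
  intro h0
  have hv0 : deriv v t ≠ 0 := fun h => hne ⟨h0, h⟩
  have hu1 := smooth_deriv hI hu
  have hv1 := smooth_deriv hI hv
  have hv2 := smooth_deriv hI hv1
  let h : ℝ → ℝ := fun s =>
    (deriv (deriv v) s - (deriv u s) ^ 2 * (2 * (v s) ^ 3 + u s * v s + a)) / deriv v s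
  have cv1 := (hv1.continuousOn.continuousAt (hI.mem_nhds ht))
  have hc : ContinuousAt h t := by
    have := (hu.continuousOn.continuousAt (hI.mem_nhds ht))
    have := (hv.continuousOn.continuousAt (hI.mem_nhds ht))
    have := (hu1.continuousOn.continuousAt (hI.mem_nhds ht))
    have := (hv2.continuousOn.continuousAt (hI.mem_nhds ht))
    exact ContinuousAt.div (by fun_prop) cv1 hv0
  have hb : ∀ᶠ s in 𝓝 t, ‖h s‖₊ < ‖h t‖₊ + 1 :=
    hc.nnnorm.eventually (gt_mem_nhds (by simp))
  have e1 : deriv u =ᶠ[𝓝 t] fun _ => 0 := by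
    refine ODE_solution_unique_of_eventually (v := fun s x => h s * x) (s := fun _ => univ)
      (K := ‖h t‖₊ + 1) ?_ ?_ ?_ h0
    · filter_upwards [hb] with s hs
      refine LipschitzWith.lipschitzOnWith ?_
      exact (lipschitzWith_smul (h s)).weaken hs.le
    · filter_upwards [hI.mem_nhds ht, cv1.eventually_ne hv0] with s hs hs0
      refine ⟨?_, trivial⟩
      have := (smooth_hd hI hu1 hs).hasDerivAt
      convert this using 1
      have := param_eq hI a hu hv hw hw2 hs
      simp only [h]
      field_simp
      linarith
    · filter_upwards with s
      refine ⟨?_, trivial⟩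
      simpa using hasDerivAt_const s (0 : ℝ)
  have e2 : u =ᶠ[𝓝 t] fun _ => u t := by
    refine ODE_solution_unique_of_eventually (v := fun s x => 0) (s := fun _ => univ)
      (K := 0) ?_ ?_ ?_ rfl
    · exact Eventually.of_forall fun s => (LipschitzWith.const (0 : ℝ)).lipschitzOnWith
    · filter_upwards [hI.mem_nhds ht, e1] with s hs hs0
      refine ⟨?_, trivial⟩
      have := (smooth_hd hI hu hs).hasDerivAt
      rwa [hs0] at this
    · exact Eventually.of_forall fun s => ⟨hasDerivAt_const s _, trivial⟩
  have e3 : v =ᶠ[𝓝 t] fun _ => w (u t) := by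
    filter_upwards [hI.mem_nhds ht, e2] with s hs h2
    rw [← hw s hs, h2]
  exact hv0 (by rw [e3.deriv_eq]; simp)

lemma chain_rule {F : ℝ → ℝ → ℝ} (hF : ContDiff ℝ ∞ (Function.uncurry F)) {y : ℝ → ℝ} {t p : ℝ}
    (hy : HasDerivAt y p t) :
    HasDerivAt (fun s => F s (y s)) (pdx F t (y t) + p * pdy F t (y t)) t := by
  have hL : ∀ q, HasFDerivAt (Function.uncurry F) (fderiv ℝ (Function.uncurry F) q) q := fun q =>
    (hF.differentiable (by simp) q).hasFDerivAt
  have h1 : pdx F t (y t) = fderiv ℝ (Function.uncurry F) (t, y t) (1, 0) :=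
    (HasFDerivAt.comp_hasDerivAt (l := Function.uncurry F) t (hL (t, y t))
      ((hasDerivAt_id t).prodMk (hasDerivAt_const t (y t)))).deriv
  have h2 : pdy F t (y t) = fderiv ℝ (Function.uncurry F) (t, y t) (0, 1) :=
    ((hL (t, y t)).comp_hasDerivAt (y t)
      ((hasDerivAt_const (y t) t).prodMk (hasDerivAt_id (y t)))).deriv
  have h3 := (hL (t, y t)).comp_hasDerivAt t ((hasDerivAt_id t).prodMk hy)
  have h4 : ((1 : ℝ), p) = (1, 0) + p • ((0 : ℝ), (1 : ℝ)) := by simp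
  rw [h4, map_add, map_smul, ← h1, ← h2] at h3
  exact h3

lemma pdx_smooth {F : ℝ → ℝ → ℝ} (hF : ContDiff ℝ ∞ (Function.uncurry F)) :
    ContDiff ℝ ∞ (Function.uncurry (pdx F)) := by
  have : Function.uncurry (pdx F) = fun q => fderiv ℝ (Function.uncurry F) q (1, 0) := by
    ext ⟨x, y⟩
    exact ((hF.differentiable (by simp) (x, y)).hasFDerivAt.comp_hasDerivAt x
      ((hasDerivAt_id x).prodMk (hasDerivAt_const x y))).deriv
  rw [this]
  exact (hF.fderiv_right (m := ∞) (by simp)).clm_apply contDiff_const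

lemma pdy_smooth {F : ℝ → ℝ → ℝ} (hF : ContDiff ℝ ∞ (Function.uncurry F)) :
    ContDiff ℝ ∞ (Function.uncurry (pdy F)) := by
  have : Function.uncurry (pdy F) = fun q => fderiv ℝ (Function.uncurry F) q (0, 1) := by
    ext ⟨x, y⟩
    exact ((hF.differentiable (by simp) (x, y)).hasFDerivAt.comp_hasDerivAt y
      ((hasDerivAt_const y x).prodMk (hasDerivAt_id y))).deriv
  rw [this]
  exact (hF.fderiv_right (m := ∞) (by simp)).clm_apply contDiff_const

/-- What point-equivalence gives at every 1-jet `(x₀, y₀, p₀)`. -/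
lemma jet_fact {a₁ a₂ : ℝ} {X Y : ℝ → ℝ → ℝ}
    (hX : ContDiff ℝ ∞ (Function.uncurry X)) (hY : ContDiff ℝ ∞ (Function.uncurry Y))
    (hJ : ∀ x y, pdx X x y * pdy Y x y - pdy X x y * pdx Y x y ≠ 0)
    (H : ∀ (I : Set ℝ) (y : ℝ → ℝ), IsOpen I → ContDiffOn ℝ ∞ y I → SolvesPII a₁ y I →
      ∃ w : ℝ → ℝ, (∀ x ∈ I, w (X x (y x)) = Y x (y x)) ∧
        SolvesPII a₂ w ((fun x => X x (y x)) '' I)) (x₀ y₀ p₀ : ℝ) :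
    ∃ (y : ℝ → ℝ), (∀ᶠ t in 𝓝 x₀, HasDerivAt y (deriv y t) t) ∧
      y x₀ = y₀ ∧ deriv y x₀ = p₀ ∧
      HasDerivAt (deriv y) (2 * y₀ ^ 3 + x₀ * y₀ + a₁) x₀ ∧
      deriv (fun t => X t (y t)) x₀ ≠ 0 ∧
      deriv (deriv (fun t => Y t (y t))) x₀ * deriv (fun t => X t (y t)) x₀
        - deriv (fun t => Y t (y t)) x₀ * deriv (deriv (fun t => X t (y t))) x₀
      = (deriv (fun t => X t (y t)) x₀) ^ 3 *
        (2 * (Y x₀ y₀) ^ 3 + X x₀ y₀ * Y x₀ y₀ + a₂) := by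
  obtain ⟨I, y, hI, hx, hy, hy0, hy1, hs⟩ := exists_sol a₁ x₀ y₀ p₀
  obtain ⟨w, hw, hw2⟩ := H I y hI hy hs
  have hu : ContDiffOn ℝ ∞ (fun t => X t (y t)) I :=
    hX.comp_contDiffOn (contDiffOn_id.prodMk hy)
  have hv : ContDiffOn ℝ ∞ (fun t => Y t (y t)) I :=
    hY.comp_contDiffOn (contDiffOn_id.prodMk hy)
  have hw2' : ∀ s ∈ I, deriv (deriv w) (X s (y s)) =
      2 * (Y s (y s)) ^ 3 + X s (y s) * Y s (y s) + a₂ := by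
    intro s hs
    have := hw2 _ (mem_image_of_mem _ hs)
    simp only [hw s hs] at this
    exact this
  have hyd := (smooth_hd hI hy hx).hasDerivAt
  refine ⟨y, ?_, hy0, hy1, ?_, ?_, ?_⟩
  · filter_upwards [hI.mem_nhds hx] with t ht using (smooth_hd hI hy ht).hasDerivAt
  · have := (smooth_hd hI (smooth_deriv hI hy) hx).hasDerivAt
    rwa [hs x₀ hx, hy0] at this
  · refine regular hI a₂ hu hv hw hw2' hx ?_
    rw [(chain_rule hX hyd).deriv, (chain_rule hY hyd).deriv]
    rintro ⟨h1, h2⟩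
    apply hJ x₀ (y x₀)
    linear_combination (pdy Y x₀ (y x₀)) * h1 - pdy X x₀ (y x₀) * h2
  · have := param_eq hI a₂ hu hv hw hw2' hx
    rwa [hy0] at this

/-- The final step, for `X = ξ(x)`, `Y = α(x) y + β(x)`. -/
lemma final_step {a₁ a₂ : ℝ} (ξ α β ξ' α' β' ξ'' α'' β'' : ℝ → ℝ)
    (hξ : ∀ x, HasDerivAt ξ (ξ' x) x) (hξ' : ∀ x, HasDerivAt ξ' (ξ'' x) x)
    (hα : ∀ x, HasDerivAt α (α' x) x) (hα' : ∀ x, HasDerivAt α' (α'' x) x)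
    (hβ : ∀ x, HasDerivAt β (β' x) x) (hβ' : ∀ x, HasDerivAt β' (β'' x) x)
    (hk : ∀ x, ξ' x ≠ 0) (ha : ∀ x, α x ≠ 0)
    (E : ∀ x y p, (α'' x * y + 2 * α' x * p + α x * (2 * y ^ 3 + x * y + a₁) + β'' x) * ξ' x
      - (α' x * y + α x * p + β' x) * ξ'' x
      = ξ' x ^ 3 * (2 * (α x * y + β x) ^ 3 + ξ x * (α x * y + β x) + a₂)) :
    a₁ = a₂ ∨ a₁ = -a₂ := by
  have E1 : ∀ x, 2 * α' x * ξ' x = α x * ξ'' x := fun x => by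
    linear_combination E x 0 1 - E x 0 0
  have E3 : ∀ x, (ξ' x * α x) ^ 2 = 1 := fun x => by
    have h : 12 * (α x * ξ' x) * ((ξ' x * α x) ^ 2 - 1) = 0 := by
      linear_combination -(E x 2 0 - 2 * E x 1 0 + 2 * E x (-1) 0 - E x (-2) 0) / 2
    have := (mul_eq_zero.1 h).resolve_left (by have := hk x; have := ha x; positivity)
    linarith
  have E2 : ∀ x, β x = 0 := fun x => by
    have h : 12 * (ξ' x ^ 3 * α x ^ 2) * β x = 0 := by
      linear_combination -(E x 1 0 - 2 * E x 0 0 + E x (-1) 0)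
    exact (mul_eq_zero.1 h).resolve_left (by have := hk x; have := ha x; positivity)
  have hβ0 : ∀ x, β' x = 0 := fun x => by
    have : β = fun _ => 0 := funext E2
    have h := hβ x
    rw [this] at h
    exact h.unique (hasDerivAt_const x 0)
  have hβ1 : ∀ x, β'' x = 0 := fun x => by
    have : β' = fun _ => 0 := funext hβ0
    have h := hβ' x
    rw [this] at h
    exact h.unique (hasDerivAt_const x 0)
  have D : ∀ x, ξ'' x * α x + ξ' x * α' x = 0 := fun x => by
    have h1 := ((hξ' x).fun_mul (hα x)).fun_pow 2
    have : (fun x => (ξ' x * α x) ^ 2) = fun _ => 1 := funext E3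
    rw [this] at h1
    have h := h1.unique (hasDerivAt_const x 1)
    have h2 : (2 * (ξ' x * α x)) * (ξ'' x * α x + ξ' x * α' x) = 0 := by
      simpa using h
    exact (mul_eq_zero.1 h2).resolve_left (by have := hk x; have := ha x; positivity)
  have A0 : ∀ x, α' x = 0 := fun x => by
    have h : (3 * ξ' x) * α' x = 0 := by linear_combination E1 x + D x
    exact (mul_eq_zero.1 h).resolve_left (by have := hk x; positivity)
  have A1 : ∀ x, α'' x = 0 := fun x => by
    have : α' = fun _ => 0 := funext A0
    have h := hα' x
    rw [this] at h
    exact h.unique (hasDerivAt_const x 0)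
  have K0 : ∀ x, ξ'' x = 0 := fun x => by
    have h : α x * ξ'' x = 0 := by rw [← E1, A0]; ring
    exact (mul_eq_zero.1 h).resolve_left (ha x)
  have L : ∀ x, ξ' x ^ 2 * ξ x = x := fun x => by
    have h1 := E x 1 0
    have h2 := E x (-1) 0
    have h3 := E3 x
    simp only [A0, A1, K0, E2, hβ1] at h1 h2
    have h : (2 * (α x * ξ' x)) * (ξ' x ^ 2 * ξ x - x) = 0 := by
      linear_combination h2 - h1 - 4 * α x * ξ' x * h3
    have := (mul_eq_zero.1 h).resolve_left (by have := hk x; have := ha x; positivity)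
    linarith
  have K1 : ξ' 0 = 1 := by
    have h1 := ((hξ' 0).fun_pow 2).fun_mul (hξ 0)
    have : (fun x => ξ' x ^ 2 * ξ x) = fun x => x := funext L
    rw [this] at h1
    have h := h1.unique (hasDerivAt_id 0)
    simp only [K0] at h
    have h2 : (ξ' 0 - 1) * (ξ' 0 ^ 2 + ξ' 0 + 1) = 0 := by linear_combination h
    have := (mul_eq_zero.1 h2).resolve_right (by nlinarith [sq_nonneg (ξ' 0 + 1 / 2)])
    linarith
  have F := E 0 0 0
  have h3 := E3 0
  simp only [A0, A1, K0, E2, hβ1, K1] at F h3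
  have h4 : (α 0 - 1) * (α 0 + 1) = 0 := by linear_combination h3
  rcases mul_eq_zero.1 h4 with h | h
  · left
    rw [sub_eq_zero.1 h] at F
    linarith
  · right
    rw [eq_neg_of_add_eq_zero_left h] at F
    linarith

/-- Lemma 1: Painlevé II equations with parameters a₁ ≠ ±a₂
are not point-equivalent. -/
theorem stmt13 (a₁ a₂ : ℝ) (h₁ : a₁ ≠ a₂) (h₂ : a₁ ≠ -a₂) :
    ¬ PIIPointEquivalent a₁ a₂ := by
  rintro ⟨X, Y, hX, hY, hJ, H⟩
  have JF := jet_fact hX hY hJ H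
  -- `X` does not depend on `y`
  have hXy : ∀ x y, pdy X x y = 0 := by
    intro x y
    by_contra h
    obtain ⟨η, e1, e2, e3, -, e5, -⟩ := JF x y (-pdx X x y / pdy X x y)
    apply e5
    rw [(chain_rule hX e1.self_of_nhds).deriv, e3, e2]
    field_simp
    ring
  have slice : ∀ {F : ℝ → ℝ → ℝ}, ContDiff ℝ ∞ (Function.uncurry F) → ∀ x,
      ContDiff ℝ ∞ (F x) := fun hF x => hF.comp (contDiff_const.prodMk contDiff_id)
  have slice2 : ∀ {F : ℝ → ℝ → ℝ}, ContDiff ℝ ∞ (Function.uncurry F) → ∀ y,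
      ContDiff ℝ ∞ (fun x => F x y) := fun hF y => hF.comp (contDiff_id.prodMk contDiff_const)
  have hX0 : ∀ x y, X x y = X x 0 := fun x y =>
    is_const_of_deriv_eq_zero ((slice hX x).differentiable (by simp)) (hXy x) y 0
  have dd : ∀ {f : ℝ → ℝ}, ContDiff ℝ ∞ f → ∀ x, HasDerivAt f (deriv f x) x := fun hf x =>
    (hf.differentiable (by simp) x).hasDerivAt
  have ds : ∀ {f : ℝ → ℝ}, ContDiff ℝ ∞ f → ContDiff ℝ ∞ (deriv f) := fun hf =>
    (contDiff_infty_iff_deriv.1 hf).2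
  set ξ : ℝ → ℝ := fun x => X x 0 with hξ
  have sξ : ContDiff ℝ ∞ ξ := slice2 hX 0
  have hXξ : ∀ η : ℝ → ℝ, (fun t => X t (η t)) = ξ := fun η => funext fun t => hX0 t (η t)
  have hk : ∀ x, deriv ξ x ≠ 0 := by
    intro x
    obtain ⟨η, -, -, -, -, e5, -⟩ := JF x 0 0
    rwa [hXξ] at e5
  have hYx := pdx_smooth hY
  have hYy := pdy_smooth hY
  -- `Y` is affine in `y`
  have hYyy : ∀ x y, pdy (pdy Y) x y = 0 := by
    intro x y
    have key : ∀ p, (pdx (pdx Y) x y + p * pdy (pdx Y) x y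
        + ((2 * y ^ 3 + x * y + a₁) * pdy Y x y
          + p * (pdx (pdy Y) x y + p * pdy (pdy Y) x y))) * deriv ξ x
        - (pdx Y x y + p * pdy Y x y) * deriv (deriv ξ) x
        = deriv ξ x ^ 3 * (2 * (Y x y) ^ 3 + X x y * Y x y + a₂) := by
      intro p
      obtain ⟨η, e1, e2, e3, e4, -, e6⟩ := JF x y p
      have c1 : deriv (fun t => Y t (η t)) =ᶠ[𝓝 x]
          fun t => pdx Y t (η t) + deriv η t * pdy Y t (η t) := by
        filter_upwards [e1] with t ht using (chain_rule hY ht).deriv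
      have hη := e1.self_of_nhds
      have c2 := ((chain_rule hYx hη).fun_add (e4.fun_mul (chain_rule hYy hη))).deriv
      have c3 := c1.self_of_nhds
      beta_reduce at c3
      rw [hXξ, c1.deriv_eq, c2, c3, e3, e2] at e6
      exact e6
    have h : (2 * deriv ξ x) * pdy (pdy Y) x y = 0 := by
      linear_combination key 1 - 2 * key 0 + key (-1)
    exact (mul_eq_zero.1 h).resolve_left (by have := hk x; positivity)
  have hYy0 : ∀ x y, pdy Y x y = pdy Y x 0 := fun x y =>
    is_const_of_deriv_eq_zero ((slice hYy x).differentiable (by simp)) (hYyy x) y 0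
  set α : ℝ → ℝ := fun x => pdy Y x 0 with hα
  set β : ℝ → ℝ := fun x => Y x 0 with hβ
  have sα : ContDiff ℝ ∞ α := slice2 hYy 0
  have sβ : ContDiff ℝ ∞ β := slice2 hY 0
  have hYaff : ∀ x y, Y x y = α x * y + β x := by
    intro x y
    have h : ∀ t, HasDerivAt (fun s => Y x s - α x * s) 0 t := fun t => by
      have h1 : HasDerivAt (fun s => Y x s) (pdy Y x t) t := dd (slice hY x) t
      have h2 := h1.fun_sub ((hasDerivAt_id t).const_mul (α x))
      rw [hYy0 x t] at h2
      simpa [hα] using h2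
    have := is_const_of_deriv_eq_zero (fun t => (h t).differentiableAt)
      (fun t => (h t).deriv) y 0
    simp only [hβ]
    linarith
  have ha : ∀ x, α x ≠ 0 := by
    intro x h
    apply hJ x 0
    rw [hXy x 0, show pdy Y x 0 = 0 from h]
    ring
  have := final_step ξ α β (deriv ξ) (deriv α) (deriv β) (deriv (deriv ξ)) (deriv (deriv α))
    (deriv (deriv β)) (a₁ := a₁) (a₂ := a₂) (dd sξ) (dd (ds sξ)) (dd sα) (dd (ds sα))
    (dd sβ) (dd (ds sβ)) hk ha ?_
  · exact this.elim h₁ h₂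
  · intro x y p
    obtain ⟨η, e1, e2, e3, e4, -, e6⟩ := JF x y p
    have hYη : (fun t => Y t (η t)) = fun t => α t * η t + β t := funext fun t => hYaff t (η t)
    have c1 : deriv (fun t => α t * η t + β t) =ᶠ[𝓝 x]
        fun t => (deriv α t * η t + α t * deriv η t) + deriv β t := by
      filter_upwards [e1] with t ht using (((dd sα t).fun_mul ht).fun_add (dd sβ t)).deriv
    have hη := e1.self_of_nhds
    have c2 := ((((dd (ds sα) x).fun_mul hη).fun_add ((dd sα x).fun_mul e4)).fun_add
      (dd (ds sβ) x)).deriv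
    have c3 := c1.self_of_nhds
    beta_reduce at c3
    rw [hXξ, hYη, c1.deriv_eq, c2, c3, e3, e2, hYaff x y, hX0 x y] at e6
    linear_combination e6
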